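/- Let Δ be a simplicial complex on [n] with facet ideal I = I(Δ), let k ≥ 1, and assume (x_1···x_n)^{k−1} ∉ I^k. Then x_j·(x_1···x_n)^{k−1} ∈ I^k for all j = 1,...,n if and only if for each j = 1,...,n there exist facets F_1,...,F_k ∈ F(Δ) with F_1 ∩ ··· ∩ F_k = {j}. -/

import Mathlib

open MvPolynomial

/-!
A monomial lies in `I^(k+1)` iff it is divisible by a product of `k + 1` facet monomials. In such a
product the exponent of `x_v` is the number of chosen facets containing `v`, which is at most
`k + 1`, with equality iff `v` lies in all of them. So the product divides
`(∏_{v ∈ S} x_v) (x₁⋯xₙ)^k` iff the intersection of the chosen facets is contained in `S`. For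
`S = ∅` this turns `(x₁⋯xₙ)^k ∉ I^(k+1)` into the statement that no `k + 1` facets have empty
intersection; for `S = {j}`, containment is then equality.
-/

open scoped Pointwise in
theorem image_pow_eq_image_prod_pi {ι M : Type*} [CommMonoid M] (g : ι → M) (s : Set ι) (k : ℕ) :
    (g '' s) ^ k = (fun f : Fin k → ι => ∏ i, g (f i)) '' Set.univ.pi fun _ => s :=
  calc
    (g '' s) ^ k = ∏ _ : Fin k, g '' s := (Fin.prod_const k _).symm
    _ = (fun f => ∏ i, f i) '' Set.univ.pi fun _ : Fin k => g '' s :=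
      (Set.image_fintype_prod_pi _).symm
    _ = (fun f : Fin k → ι => ∏ i, g (f i)) '' Set.univ.pi fun _ => s := by
      rw [← Set.piMap_image_univ_pi, Set.image_image]
      simp only [Pi.map_apply]

theorem card_filter_mem_lt_card_iff_notMem_inf {ι σ : Type*} [Fintype ι] [Fintype σ]
    [DecidableEq σ] (F : ι → Finset σ) (v : σ) :
    (Finset.univ.filter fun i => v ∈ F i).card < Fintype.card ι ↔ v ∉ Finset.univ.inf F := by
  rw [← Finset.card_univ, (Finset.card_filter_le _ _).lt_iff_ne, Ne, Finset.card_filter_eq_iff,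
    Finset.mem_inf]

theorem sum_indicator_le_indicator_add_iff_inf_subset {σ : Type*} [Fintype σ] [DecidableEq σ]
    {k : ℕ} (F : Fin (k + 1) → Finset σ) (S : Finset σ) :
    (∑ i, Finsupp.indicator (F i) fun _ _ => 1 : σ →₀ ℕ) ≤
        (Finsupp.indicator S fun _ _ => 1) + k • Finsupp.indicator Finset.univ (fun _ _ => 1) ↔
      Finset.univ.inf F ⊆ S := by
  refine forall_congr' fun v => ?_
  have hcount : (∑ i, Finsupp.indicator (F i) fun _ _ => 1) v =
      (Finset.univ.filter fun i => v ∈ F i).card := by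
    simp [Finsupp.indicator_apply]
  have hle : (Finset.univ.filter fun i => v ∈ F i).card ≤ k + 1 := by
    simpa using Finset.card_filter_le Finset.univ fun i => v ∈ F i
  have hlt := card_filter_mem_lt_card_iff_notMem_inf F v
  rw [Fintype.card_fin, Nat.lt_succ_iff] at hlt
  rw [hcount]
  by_cases hv : v ∈ S
  · simpa [Finsupp.indicator_apply, hv, add_comm] using hle
  · simpa [Finsupp.indicator_apply, hv] using hlt

section MonomialIdeal

variable {σ R : Type*} [CommSemiring R]

theorem prod_X_eq_monomial_indicator (F : Finset σ) :
    ∏ v ∈ F, (X v : MvPolynomial σ R) = monomial (Finsupp.indicator F fun _ _ => 1) 1 := by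
  rw [Finsupp.indicator_eq_sum_single, monomial_sum_one]
  rfl

theorem monomial_mem_span_monomial_pow_iff [Nontrivial R] {ι : Type*} (e : ι → σ →₀ ℕ)
    (s : Set ι) (k : ℕ) (a : σ →₀ ℕ) :
    monomial a (1 : R) ∈ Ideal.span ((fun x => monomial (e x) (1 : R)) '' s) ^ k ↔
      ∃ f : Fin k → ι, (∀ i, f i ∈ s) ∧ ∑ i, e (f i) ≤ a := by
  classical
  have hspan : Ideal.span ((fun x => monomial (e x) (1 : R)) '' s) ^ k =
      Ideal.span ((fun b => monomial b (1 : R)) ''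
        ((fun f : Fin k → ι => ∑ i, e (f i)) '' Set.univ.pi fun _ => s)) := by
    rw [Ideal.span, Submodule.span_pow, image_pow_eq_image_prod_pi, Set.image_image]
    simp only [monomial_sum_one]
  rw [hspan, mem_ideal_span_monomial_image, support_monomial, if_neg one_ne_zero]
  simp only [Finset.mem_singleton, forall_eq, Set.exists_mem_image, Set.mem_univ_pi]

end MonomialIdeal

section FacetIdeal

variable {σ : Type*} (R : Type*) [CommSemiring R]

/-- The facet ideal, over `R`, of the simplicial complex with facet set `ℱ`. The facets are not
required to be pairwise incomparable, so `ℱ` may be any set of finite sets of vertices. -/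
noncomputable def facetIdeal (ℱ : Set (Finset σ)) : Ideal (MvPolynomial σ R) :=
  Ideal.span ((fun F : Finset σ => ∏ i ∈ F, (X i : MvPolynomial σ R)) '' ℱ)

variable {R} [Fintype σ] [DecidableEq σ] [Nontrivial R]

theorem prod_X_mul_prod_X_pow_mem_facetIdeal_pow_succ_iff (ℱ : Set (Finset σ)) (S : Finset σ)
    (k : ℕ) :
    (∏ v ∈ S, X v) * (∏ v, X v) ^ k ∈ facetIdeal R ℱ ^ (k + 1) ↔
      ∃ F : Fin (k + 1) → Finset σ, (∀ i, F i ∈ ℱ) ∧ Finset.univ.inf F ⊆ S := by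
  simp only [facetIdeal, prod_X_eq_monomial_indicator, monomial_pow, one_pow, monomial_mul,
    one_mul, monomial_mem_span_monomial_pow_iff, sum_indicator_le_indicator_add_iff_inf_subset]

theorem stmt7_general (ℱ : Set (Finset σ)) (k : ℕ)
    (hnotin : (∏ v, X v) ^ k ∉ facetIdeal R ℱ ^ (k + 1)) :
    (∀ j, X j * (∏ v, X v) ^ k ∈ facetIdeal R ℱ ^ (k + 1)) ↔
      ∀ j, ∃ F : Fin (k + 1) → Finset σ, (∀ i, F i ∈ ℱ) ∧ Finset.univ.inf F = {j} := by
  have hinf_ne (F : Fin (k + 1) → Finset σ) (hF : ∀ i, F i ∈ ℱ) : Finset.univ.inf F ≠ ∅ := by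
    intro hempty
    apply hnotin
    simpa using (prod_X_mul_prod_X_pow_mem_facetIdeal_pow_succ_iff (R := R) ℱ ∅ k).2
      ⟨F, hF, hempty.subset⟩
  refine forall_congr' fun j => ?_
  rw [← Finset.prod_singleton X j, prod_X_mul_prod_X_pow_mem_facetIdeal_pow_succ_iff]
  refine exists_congr fun F => and_congr_right fun hF => ?_
  rw [Finset.subset_singleton_iff, or_iff_right (hinf_ne F hF)]

end FacetIdeal

/-- Assume `(x₁⋯xₙ)^(k-1) ∉ I^k` for the facet ideal `I` of a simplicial complex
with facet set `ℱ`. Then `xⱼ·(x₁⋯xₙ)^(k-1) ∈ I^k` for all `j` iff for each `j`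
there are `k` facets whose intersection is `{j}`. -/
theorem stmt7 (n : ℕ) (K : Type*) [Field K]
    (ℱ : Set (Finset (Fin n))) (hne : ∀ F ∈ ℱ, F.Nonempty)
    (I : Ideal (MvPolynomial (Fin n) K))
    (hI : I = Ideal.span ((fun F : Finset (Fin n) => ∏ i ∈ F, (X i : MvPolynomial (Fin n) K)) '' ℱ))
    (k : ℕ) (hk : 1 ≤ k)
    (hnotin : (∏ i : Fin n, (X i : MvPolynomial (Fin n) K)) ^ (k - 1) ∉ I ^ k) :
    (∀ j : Fin n, X j * (∏ i : Fin n, (X i : MvPolynomial (Fin n) K)) ^ (k - 1) ∈ I ^ k)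
      ↔ (∀ j : Fin n, ∃ F : Fin k → Finset (Fin n),
          (∀ i, F i ∈ ℱ) ∧ Finset.univ.inf F = {j}) := by
  obtain ⟨k, rfl⟩ := Nat.exists_eq_add_of_le' hk
  subst hI
  exact stmt7_general ℱ k hnotin
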